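/- arXiv:1306.5358 — 2 statements merged into one kernel-verified Lean document; each statement's English description precedes it below -/
import Mathlib

section
/- Let 0 ≤ p ≤ 1 and K a fixed n×n complex matrix. The map Z ↦ tr(Z^p K* Z^{1−p} K) is concave on positive definite n×n matrices (Lieb's concavity theorem, trace form). -/
open Matrix ComplexOrder

/-- Functional calculus for Hermitian matrices: apply `f` to the eigenvalues. -/
noncomputable def mfun {m : Type*} [Fintype m] [DecidableEq m] (f : ℝ → ℝ)
    (A : Matrix m m ℂ) : Matrix m m ℂ :=
  if hA : A.IsHermitian then
    (hA.eigenvectorUnitary : Matrix m m ℂ) *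
      Matrix.diagonal (fun i => (f (hA.eigenvalues i) : ℂ)) *
      (star (hA.eigenvectorUnitary : Matrix m m ℂ))
  else 0

/-- Real matrix power via the functional calculus. -/
noncomputable def mpow {m : Type*} [Fintype m] [DecidableEq m]
    (A : Matrix m m ℂ) (p : ℝ) : Matrix m m ℂ :=
  mfun (fun x => x ^ p) A

/-- Overlaps of `K` in an eigenbasis. -/
noncomputable def ovl {n : ℕ} {Z : Matrix (Fin n) (Fin n) ℂ} (h : Z.IsHermitian)
    (K : Matrix (Fin n) (Fin n) ℂ) : Matrix (Fin n) (Fin n) ℂ :=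
  star (h.eigenvectorUnitary : Matrix (Fin n) (Fin n) ℂ) * K *
    (h.eigenvectorUnitary : Matrix (Fin n) (Fin n) ℂ)

lemma trace_diag {n : ℕ} (f g : Fin n → ℝ) (M : Matrix (Fin n) (Fin n) ℂ) :
    (Matrix.diagonal (fun i => (f i : ℂ)) * Mᴴ * Matrix.diagonal (fun i => (g i : ℂ)) * M).trace.re
      = ∑ i, ∑ j, f i * g j * Complex.normSq (M j i) := by
  simp only [Matrix.trace, Matrix.diag_apply, Complex.re_sum]
  refine Finset.sum_congr rfl fun i _ => ?_
  rw [Matrix.mul_apply, Complex.re_sum]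
  refine Finset.sum_congr rfl fun j _ => ?_
  rw [Matrix.mul_diagonal, Matrix.diagonal_mul, Matrix.conjTranspose_apply]
  have : (f i : ℂ) * star (M j i) * (g j : ℂ) * M j i
      = ((f i * g j * Complex.normSq (M j i) : ℝ) : ℂ) := by
    push_cast
    rw [Complex.normSq_eq_conj_mul_self]
    simp only [Complex.star_def]
    ring
  rw [this, Complex.ofReal_re]

lemma trace_mfun {n : ℕ} {Z : Matrix (Fin n) (Fin n) ℂ} (h : Z.IsHermitian) (f g : ℝ → ℝ)
    (K : Matrix (Fin n) (Fin n) ℂ) :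
    (mfun f Z * Kᴴ * mfun g Z * K).trace.re
      = ∑ i, ∑ j, f (h.eigenvalues i) * g (h.eigenvalues j) * Complex.normSq (ovl h K j i) := by
  rw [← trace_diag (fun i => f (h.eigenvalues i)) (fun i => g (h.eigenvalues i))]
  simp only [mfun, dif_pos h, ovl]
  set U := (h.eigenvectorUnitary : Matrix (Fin n) (Fin n) ℂ)
  congr 1
  simp only [Matrix.conjTranspose_mul, Matrix.star_eq_conjTranspose,
    Matrix.conjTranspose_conjTranspose, Matrix.mul_assoc]
  rw [Matrix.trace_mul_comm U]
  simp only [Matrix.mul_assoc]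

lemma mfun_id {n : ℕ} {Z : Matrix (Fin n) (Fin n) ℂ} (h : Z.IsHermitian) :
    mfun (fun x => x) Z = Z := by
  simp only [mfun, dif_pos h]
  conv_rhs => rw [h.spectral_theorem]
  rw [Unitary.conjStarAlgAut_apply]
  rfl

lemma mfun_one {n : ℕ} {Z : Matrix (Fin n) (Fin n) ℂ} (h : Z.IsHermitian) :
    mfun (fun _ => 1) Z = 1 := by
  simp only [mfun, dif_pos h]
  simp

/-- The linear functional in the variational formula. -/
noncomputable def lin {n : ℕ} (s : ℝ) (A B Z : Matrix (Fin n) (Fin n) ℂ) : ℝ :=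
  (Aᴴ * Z * A).trace.re + s⁻¹ * (Z * Bᴴ * B).trace.re

lemma lin_eq {n : ℕ} {Z : Matrix (Fin n) (Fin n) ℂ} (h : Z.IsHermitian) (s : ℝ)
    (A B : Matrix (Fin n) (Fin n) ℂ) :
    lin s A B Z = ∑ i, ∑ j, (h.eigenvalues j * Complex.normSq (ovl h A j i) +
      s⁻¹ * h.eigenvalues i * Complex.normSq (ovl h B j i)) := by
  have h1 := trace_mfun h (fun _ => 1) (fun x => x) A
  have h2 := trace_mfun h (fun x => x) (fun _ => 1) B
  rw [mfun_id h, mfun_one h] at h1 h2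
  simp only [Matrix.one_mul, Matrix.mul_one, one_mul, mul_one] at h1 h2
  rw [lin, h1, h2, Finset.mul_sum, ← Finset.sum_add_distrib]
  refine Finset.sum_congr rfl fun i _ => ?_
  rw [Finset.mul_sum, ← Finset.sum_add_distrib]
  refine Finset.sum_congr rfl fun j _ => ?_
  ring

lemma lin_comb {n : ℕ} (s a b : ℝ) (A B Z W : Matrix (Fin n) (Fin n) ℂ) :
    lin s A B ((a : ℂ) • Z + (b : ℂ) • W) = a * lin s A B Z + b * lin s A B W := by
  simp only [lin, Matrix.mul_add, Matrix.add_mul, Matrix.mul_smul, Matrix.smul_mul,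
    Matrix.trace_add, Matrix.trace_smul, Complex.add_re, smul_eq_mul, Complex.re_ofReal_mul]
  ring

/-- The parallel sum form. -/
noncomputable def par {n : ℕ} {Z : Matrix (Fin n) (Fin n) ℂ} (h : Z.IsHermitian) (s : ℝ)
    (K : Matrix (Fin n) (Fin n) ℂ) : ℝ :=
  ∑ i, ∑ j, h.eigenvalues i * h.eigenvalues j / (h.eigenvalues i + s * h.eigenvalues j) *
    Complex.normSq (ovl h K j i)

lemma scalar_par (x y s : ℝ) (hx : 0 < x) (hy : 0 < y) (hs : 0 < s) (a b : ℂ) :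
    x * y / (x + s * y) * Complex.normSq (a + b) ≤
      y * Complex.normSq a + s⁻¹ * x * Complex.normSq b := by
  have hd : 0 < x + s * y := by positivity
  have key : y * Complex.normSq a + s⁻¹ * x * Complex.normSq b
      - x * y / (x + s * y) * Complex.normSq (a + b)
      = ((s * y * a.re - x * b.re) ^ 2 + (s * y * a.im - x * b.im) ^ 2) / (s * (x + s * y)) := by
    simp only [Complex.normSq_apply, Complex.add_re, Complex.add_im]
    field_simp
    ring
  have : 0 ≤ ((s * y * a.re - x * b.re) ^ 2 + (s * y * a.im - x * b.im) ^ 2)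
    / (s * (x + s * y)) := by positivity
  linarith

lemma par_le {n : ℕ} {Z : Matrix (Fin n) (Fin n) ℂ} (h : Z.PosDef) (s : ℝ) (hs : 0 < s)
    (A B : Matrix (Fin n) (Fin n) ℂ) : par h.isHermitian s (A + B) ≤ lin s A B Z := by
  rw [lin_eq h.isHermitian, par]
  refine Finset.sum_le_sum fun i _ => Finset.sum_le_sum fun j _ => ?_
  have : ovl h.isHermitian (A + B) = ovl h.isHermitian A + ovl h.isHermitian B := by
    simp [ovl, Matrix.mul_add, Matrix.add_mul]
  rw [this, Matrix.add_apply]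
  exact scalar_par _ _ _ (h.eigenvalues_pos i) (h.eigenvalues_pos j) hs _ _

lemma par_attained {n : ℕ} {Z : Matrix (Fin n) (Fin n) ℂ} (h : Z.PosDef) (s : ℝ) (hs : 0 < s)
    (K : Matrix (Fin n) (Fin n) ℂ) :
    ∃ A B, A + B = K ∧ lin s A B Z = par h.isHermitian s K := by
  let e := h.isHermitian.eigenvalues
  have he : ∀ i, 0 < e i := h.eigenvalues_pos
  let U := (h.isHermitian.eigenvectorUnitary : Matrix (Fin n) (Fin n) ℂ)
  have hU1 : star U * U = 1 := Unitary.coe_star_mul_self _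
  have hU2 : U * star U = 1 := Unitary.coe_mul_star_self _
  let M := ovl h.isHermitian K
  let N : Matrix (Fin n) (Fin n) ℂ := fun j i => ((e i / (e i + s * e j) : ℝ) : ℂ) * M j i
  let P : Matrix (Fin n) (Fin n) ℂ := fun j i => ((s * e j / (e i + s * e j) : ℝ) : ℂ) * M j i
  have hov : ∀ X, ovl h.isHermitian (U * X * star U) = X := by
    intro X
    change star U * (U * X * star U) * U = X
    calc _ = (star U * U) * X * (star U * U) := by simp only [Matrix.mul_assoc]
      _ = X := by rw [hU1]; simp
  have hNP : N + P = M := by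
    ext j i
    have hd : e i + s * e j ≠ 0 := by have := he i; have := he j; positivity
    change ((e i / (e i + s * e j) : ℝ) : ℂ) * M j i + ((s * e j / (e i + s * e j) : ℝ) : ℂ) * M j i
      = M j i
    rw [← add_mul, ← Complex.ofReal_add, ← add_div, div_self hd]
    simp
  refine ⟨U * N * star U, U * P * star U, ?_, ?_⟩
  · rw [← Matrix.add_mul, ← Matrix.mul_add, hNP]
    change U * (star U * K * U) * star U = K
    calc _ = (U * star U) * K * (U * star U) := by simp only [Matrix.mul_assoc]
      _ = K := by rw [hU2]; simp
  · rw [lin_eq h.isHermitian, par, hov, hov]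
    refine Finset.sum_congr rfl fun i _ => Finset.sum_congr rfl fun j _ => ?_
    have hi := he i
    have hj := he j
    have hd : e i + s * e j ≠ 0 := by positivity
    simp only [N, P, Complex.normSq_mul, Complex.normSq_ofReal]
    change e j * _ + s⁻¹ * e i * _ = e i * e j / (e i + s * e j) * Complex.normSq (M j i)
    field_simp

lemma par_concave {n : ℕ} {Z W V : Matrix (Fin n) (Fin n) ℂ} (hZ : Z.PosDef) (hW : W.PosDef)
    (hV : V.PosDef) (a b : ℝ) (ha : 0 ≤ a) (hb : 0 ≤ b) (e : V = (a : ℂ) • Z + (b : ℂ) • W)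
    (s : ℝ) (hs : 0 < s) (K : Matrix (Fin n) (Fin n) ℂ) :
    a * par hZ.isHermitian s K + b * par hW.isHermitian s K ≤ par hV.isHermitian s K := by
  obtain ⟨A, B, rfl, h⟩ := par_attained hV s hs K
  rw [← h, e, lin_comb]
  exact add_le_add (mul_le_mul_of_nonneg_left (par_le hZ s hs A B) ha)
    (mul_le_mul_of_nonneg_left (par_le hW s hs A B) hb)

lemma scalar_int (p s x y : ℝ) (hs : 0 < s) (hx : 0 < x) (hy : 0 < y) :
    y * Real.rpowIntegrand₀₁ p s (x / y) = s ^ p * s⁻¹ * (x * y / (x + s * y)) := by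
  rw [Real.rpowIntegrand₀₁]
  have : s + x / y ≠ 0 := by positivity
  have : x + s * y ≠ 0 := by positivity
  have : s * y + x ≠ 0 := by positivity
  field_simp
  ring

lemma trace_integral {n : ℕ} (p : ℝ) (μ : MeasureTheory.Measure ℝ)
    (hμ : ∀ x ∈ Set.Ici (0 : ℝ),
      MeasureTheory.IntegrableOn (fun t => Real.rpowIntegrand₀₁ p t x) (Set.Ioi 0) μ ∧
      x ^ p = ∫ t in Set.Ioi 0, Real.rpowIntegrand₀₁ p t x ∂μ)
    {Z : Matrix (Fin n) (Fin n) ℂ} (h : Z.PosDef) (K : Matrix (Fin n) (Fin n) ℂ) :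
    MeasureTheory.IntegrableOn (fun s => s ^ p * s⁻¹ * par h.isHermitian s K) (Set.Ioi 0) μ ∧
    (mpow Z p * Kᴴ * mpow Z (1 - p) * K).trace.re
      = ∫ s in Set.Ioi 0, s ^ p * s⁻¹ * par h.isHermitian s K ∂μ := by
  set e := h.isHermitian.eigenvalues with hedef
  have he : ∀ i, 0 < e i := h.eigenvalues_pos
  let F : Fin n → Fin n → ℝ → ℝ := fun i j s =>
    e j * Real.rpowIntegrand₀₁ p s (e i / e j) * Complex.normSq (ovl h.isHermitian K j i)
  have hF : ∀ i j, MeasureTheory.IntegrableOn (F i j) (Set.Ioi 0) μ := fun i j =>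
    ((hμ (e i / e j) (div_pos (he i) (he j)).le).1.const_mul _).mul_const _
  have heq : Set.EqOn (fun s => ∑ i, ∑ j, F i j s)
      (fun s => s ^ p * s⁻¹ * par h.isHermitian s K) (Set.Ioi 0) := by
    intro s hs
    simp only [par, Finset.mul_sum, F]
    refine Finset.sum_congr rfl fun i _ => Finset.sum_congr rfl fun j _ => ?_
    rw [scalar_int p s _ _ hs (he i) (he j), mul_assoc]
  have hint : MeasureTheory.IntegrableOn (fun s => ∑ i, ∑ j, F i j s) (Set.Ioi 0) μ :=
    MeasureTheory.integrable_finsetSum _ fun i _ =>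
      MeasureTheory.integrable_finsetSum _ fun j _ => hF i j
  refine ⟨hint.congr_fun heq measurableSet_Ioi, ?_⟩
  rw [← MeasureTheory.setIntegral_congr_fun measurableSet_Ioi heq,
    MeasureTheory.integral_finsetSum _ fun i _ =>
      MeasureTheory.integrable_finsetSum _ fun j _ => hF i j, mpow, mpow,
    trace_mfun h.isHermitian]
  refine Finset.sum_congr rfl fun i _ => ?_
  rw [MeasureTheory.integral_finsetSum _ fun j _ => hF i j]
  refine Finset.sum_congr rfl fun j _ => ?_
  simp only [F]
  rw [MeasureTheory.integral_mul_const, MeasureTheory.integral_const_mul,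
    ← (hμ (e i / e j) (div_pos (he i) (he j)).le).2]
  congr 1
  rw [← hedef, Real.div_rpow (he i).le (he j).le, Real.rpow_sub (he j), Real.rpow_one]
  ring

lemma mpow_zero' {n : ℕ} {Z : Matrix (Fin n) (Fin n) ℂ} (h : Z.PosDef) : mpow Z 0 = 1 := by
  simp only [mpow, Real.rpow_zero]
  exact mfun_one h.isHermitian

lemma mpow_one' {n : ℕ} {Z : Matrix (Fin n) (Fin n) ℂ} (h : Z.PosDef) : mpow Z 1 = Z := by
  simp only [mpow, Real.rpow_one]
  exact mfun_id h.isHermitian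

theorem lieb_concavity_trace {n : ℕ} (K : Matrix (Fin n) (Fin n) ℂ) (p : ℝ)
    (hp0 : 0 ≤ p) (hp1 : p ≤ 1) (Z₀ Z₁ : Matrix (Fin n) (Fin n) ℂ)
    (hZ₀ : Z₀.PosDef) (hZ₁ : Z₁.PosDef) (t : ℝ) (ht0 : 0 ≤ t) (ht1 : t ≤ 1) :
    (1 - t) * (mpow Z₀ p * Kᴴ * mpow Z₀ (1 - p) * K).trace.re +
        t * (mpow Z₁ p * Kᴴ * mpow Z₁ (1 - p) * K).trace.re ≤
      (mpow (((1 - t : ℝ) : ℂ) • Z₀ + ((t : ℝ) : ℂ) • Z₁) p * Kᴴ *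
        mpow (((1 - t : ℝ) : ℂ) • Z₀ + ((t : ℝ) : ℂ) • Z₁) (1 - p) * K).trace.re := by
  have hV : (((1 - t : ℝ) : ℂ) • Z₀ + ((t : ℝ) : ℂ) • Z₁).PosDef := by
    rcases ht0.eq_or_lt with rfl | ht
    · simpa using hZ₀
    · have h1 : (((t : ℝ) : ℂ) • Z₁).PosDef := hZ₁.smul (by exact_mod_cast ht)
      have h0 : (((1 - t : ℝ) : ℂ) • Z₀).PosSemidef :=
        hZ₀.posSemidef.smul (by exact_mod_cast sub_nonneg.2 ht1)
      exact Matrix.PosDef.posSemidef_add h0 h1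
  rcases hp0.eq_or_lt with rfl | hp0
  · rw [sub_zero, mpow_zero' hZ₀, mpow_zero' hZ₁, mpow_zero' hV, mpow_one' hZ₀, mpow_one' hZ₁,
      mpow_one' hV]
    simp only [Matrix.mul_add, Matrix.add_mul, Matrix.mul_smul, Matrix.smul_mul,
      Matrix.trace_add, Matrix.trace_smul, Complex.add_re, smul_eq_mul, Complex.re_ofReal_mul]
    exact le_rfl
  rcases hp1.eq_or_lt with rfl | hp1
  · rw [sub_self, mpow_zero' hZ₀, mpow_zero' hZ₁, mpow_zero' hV, mpow_one' hZ₀, mpow_one' hZ₁,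
      mpow_one' hV]
    simp only [Matrix.mul_add, Matrix.add_mul, Matrix.mul_smul, Matrix.smul_mul,
      Matrix.trace_add, Matrix.trace_smul, Complex.add_re, smul_eq_mul, Complex.re_ofReal_mul]
    exact le_rfl
  obtain ⟨μ, hμ⟩ := Real.exists_measure_rpow_eq_integral_rpowIntegrand₀₁ (p := p) ⟨hp0, hp1⟩
  obtain ⟨i0, e0⟩ := trace_integral p μ hμ hZ₀ K
  obtain ⟨i1, e1⟩ := trace_integral p μ hμ hZ₁ K
  obtain ⟨iV, eV⟩ := trace_integral p μ hμ hV K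
  rw [e0, e1, eV, ← MeasureTheory.integral_const_mul, ← MeasureTheory.integral_const_mul,
    ← MeasureTheory.integral_add (i0.const_mul _) (i1.const_mul _)]
  refine MeasureTheory.setIntegral_mono_on ((i0.const_mul _).add (i1.const_mul _)) iV
    measurableSet_Ioi fun s hs => ?_
  have hs : 0 < s := hs
  have hc := par_concave hZ₀ hZ₁ hV (1 - t) t (sub_nonneg.2 ht1) ht0 rfl s hs K
  have hw : 0 ≤ s ^ p * s⁻¹ := by positivity
  have := mul_le_mul_of_nonneg_left hc hw
  refine le_trans (le_of_eq ?_) this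
  ring
end

section
/- Let −1 ≤ p < 0 and let K be a fixed n×n complex matrix. The map Z ↦ tr(Z^p K* Z^{1−p} K) is convex on positive definite n×n matrices (a form of Ando's convexity theorem). -/
open Matrix ComplexOrder

theorem mfun_eq {m : Type*} [Fintype m] [DecidableEq m] (f : ℝ → ℝ)
    {A : Matrix m m ℂ} (hA : A.IsHermitian) : mfun f A =
    (hA.eigenvectorUnitary : Matrix m m ℂ) *
      Matrix.diagonal (fun i => (f (hA.eigenvalues i) : ℂ)) *
      (hA.eigenvectorUnitary : Matrix m m ℂ)ᴴ := by
  rw [mfun, dif_pos hA]; rfl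

theorem mfun_id_s9 {m : Type*} [Fintype m] [DecidableEq m]
    {A : Matrix m m ℂ} (hA : A.IsHermitian) : mfun (fun x => x) A = A := by
  rw [mfun_eq _ hA]
  conv_rhs => rw [hA.spectral_theorem]
  rfl

theorem mfun_one_s9 {m : Type*} [Fintype m] [DecidableEq m]
    {A : Matrix m m ℂ} (hA : A.IsHermitian) : mfun (fun _ => 1) A = 1 := by
  rw [mfun_eq _ hA]
  simp only [Complex.ofReal_one, Matrix.diagonal_one, mul_one]
  exact Unitary.mul_star_self_of_mem hA.eigenvectorUnitary.2

/-- conjugation into the eigenbasis -/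
noncomputable def rot {m : Type*} [Fintype m] [DecidableEq m]
    {A : Matrix m m ℂ} (hA : A.IsHermitian) (K : Matrix m m ℂ) : Matrix m m ℂ :=
  (hA.eigenvectorUnitary : Matrix m m ℂ)ᴴ * K * (hA.eigenvectorUnitary : Matrix m m ℂ)

theorem rot_surj {m : Type*} [Fintype m] [DecidableEq m]
    {A : Matrix m m ℂ} (hA : A.IsHermitian) (V : Matrix m m ℂ) : ∃ W, rot hA W = V := by
  refine ⟨(hA.eigenvectorUnitary : Matrix m m ℂ) * V *
    (hA.eigenvectorUnitary : Matrix m m ℂ)ᴴ, ?_⟩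
  have h : (hA.eigenvectorUnitary : Matrix m m ℂ)ᴴ * (hA.eigenvectorUnitary : Matrix m m ℂ) = 1 :=
    Unitary.star_mul_self_of_mem hA.eigenvectorUnitary.2
  unfold rot
  calc _ = ((hA.eigenvectorUnitary : Matrix m m ℂ)ᴴ * (hA.eigenvectorUnitary : Matrix m m ℂ)) * V *
     ((hA.eigenvectorUnitary : Matrix m m ℂ)ᴴ * (hA.eigenvectorUnitary : Matrix m m ℂ)) := by
        simp only [mul_assoc]
    _ = V := by rw [h]; simp

theorem trace_formula {m : Type*} [Fintype m] [DecidableEq m]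
    {A : Matrix m m ℂ} (hA : A.IsHermitian) (f g : ℝ → ℝ) (W K : Matrix m m ℂ) :
    (Wᴴ * mfun f A * K * mfun g A).trace.re = ∑ i, ∑ j,
      f (hA.eigenvalues j) * g (hA.eigenvalues i) *
        (star (rot hA W j i) * rot hA K j i).re := by
  have h1 : (Wᴴ * mfun f A * K * mfun g A).trace =
      ((rot hA W)ᴴ * Matrix.diagonal (fun i => (f (hA.eigenvalues i) : ℂ)) * rot hA K *
        Matrix.diagonal (fun i => (g (hA.eigenvalues i) : ℂ))).trace := by
    rw [mfun_eq _ hA, mfun_eq _ hA, rot, rot]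
    simp only [Matrix.conjTranspose_mul, Matrix.conjTranspose_conjTranspose, ← mul_assoc]
    rw [Matrix.trace_mul_comm]
    simp only [← mul_assoc]
  rw [h1, Matrix.trace, Complex.re_sum]
  refine Finset.sum_congr rfl fun i _ => ?_
  rw [Matrix.diag_apply, Matrix.mul_diagonal, Matrix.mul_apply, Finset.sum_mul, Complex.re_sum]
  refine Finset.sum_congr rfl fun j _ => ?_
  rw [Matrix.mul_diagonal, Matrix.conjTranspose_apply]
  rw [← Complex.re_ofReal_mul]
  congr 1
  push_cast
  ring

/-- The variational functional. -/
noncomputable def Phi {m : Type*} [Fintype m] [DecidableEq m] (μ t : ℝ)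
    (K W A : Matrix m m ℂ) : ℝ :=
  2 * (Wᴴ * A * K).trace.re - μ * (Wᴴ * A * W).trace.re - t * (Wᴴ * W * A).trace.re

noncomputable def Gfun {m : Type*} [Fintype m] [DecidableEq m] (μ t : ℝ)
    (K : Matrix m m ℂ) {A : Matrix m m ℂ} (hA : A.IsHermitian) : ℝ :=
  ∑ i, ∑ j, (hA.eigenvalues j) ^ 2 / (μ * hA.eigenvalues j + t * hA.eigenvalues i) *
    (star (rot hA K j i) * rot hA K j i).re

theorem Phi_formula {m : Type*} [Fintype m] [DecidableEq m] (μ t : ℝ)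
    (K W : Matrix m m ℂ) {A : Matrix m m ℂ} (hA : A.IsHermitian) :
    Phi μ t K W A = ∑ i, ∑ j, (2 * hA.eigenvalues j * (star (rot hA W j i) * rot hA K j i).re
      - (μ * hA.eigenvalues j + t * hA.eigenvalues i) *
        (star (rot hA W j i) * rot hA W j i).re) := by
  have h1 := trace_formula hA (fun x => x) (fun _ => 1) W K
  have h2 := trace_formula hA (fun x => x) (fun _ => 1) W W
  have h3 := trace_formula hA (fun _ => 1) (fun x => x) W W
  rw [mfun_id_s9 hA, mfun_one_s9 hA, mul_one] at h1 h2 h3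
  rw [Phi, h1, h2, h3]
  simp only [Finset.mul_sum, ← Finset.sum_sub_distrib]
  refine Finset.sum_congr rfl fun i _ => Finset.sum_congr rfl fun j _ => ?_
  ring

theorem Phi_le {m : Type*} [Fintype m] [DecidableEq m] {μ t : ℝ} (hμ : 0 ≤ μ) (ht : 0 < t)
    (K W : Matrix m m ℂ) {A : Matrix m m ℂ} (hA : A.PosDef) :
    Phi μ t K W A ≤ Gfun μ t K hA.isHermitian := by
  rw [Phi_formula _ _ _ _ hA.isHermitian, Gfun]
  refine Finset.sum_le_sum fun i _ => Finset.sum_le_sum fun j _ => ?_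
  have hi := hA.eigenvalues_pos i
  have hj := hA.eigenvalues_pos j
  set a := hA.isHermitian.eigenvalues i
  set b := hA.isHermitian.eigenvalues j
  have hc : 0 < μ * b + t * a := by positivity
  set c := μ * b + t * a
  generalize rot hA.isHermitian W j i = w
  generalize rot hA.isHermitian K j i = k
  simp only [Complex.mul_re, RCLike.star_def, Complex.conj_re, Complex.conj_im]
  have key : b ^ 2 / c * (k.re * k.re - -k.im * k.im) - (2 * b * (w.re * k.re - -w.im * k.im)
      - c * (w.re * w.re - -w.im * w.im)) = ((b * k.re - c * w.re)^2 + (b * k.im - c * w.im)^2) / c := by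
    field_simp
    ring
  have : 0 ≤ ((b * k.re - c * w.re)^2 + (b * k.im - c * w.im)^2) / c := by positivity
  linarith

theorem Phi_attained {m : Type*} [Fintype m] [DecidableEq m] {μ t : ℝ} (hμ : 0 ≤ μ) (ht : 0 < t)
    (K : Matrix m m ℂ) {A : Matrix m m ℂ} (hA : A.PosDef) :
    ∃ W, Phi μ t K W A = Gfun μ t K hA.isHermitian := by
  obtain ⟨W, hW⟩ := rot_surj hA.isHermitian (Matrix.of fun j i =>
    ((hA.isHermitian.eigenvalues j / (μ * hA.isHermitian.eigenvalues j +
      t * hA.isHermitian.eigenvalues i) : ℝ) : ℂ) * rot hA.isHermitian K j i)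
  refine ⟨W, ?_⟩
  rw [Phi_formula _ _ _ _ hA.isHermitian, Gfun]
  refine Finset.sum_congr rfl fun i _ => Finset.sum_congr rfl fun j _ => ?_
  rw [hW, Matrix.of_apply]
  have hi := hA.eigenvalues_pos i
  have hj := hA.eigenvalues_pos j
  set a := hA.isHermitian.eigenvalues i
  set b := hA.isHermitian.eigenvalues j
  have hc : 0 < μ * b + t * a := by positivity
  set c := μ * b + t * a
  generalize rot hA.isHermitian K j i = k
  simp only [Complex.mul_re, Complex.mul_im, RCLike.star_def, Complex.conj_re, Complex.conj_im,
    Complex.ofReal_re, Complex.ofReal_im]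
  field_simp
  ring

theorem Phi_affine {m : Type*} [Fintype m] [DecidableEq m] (μ r : ℝ)
    (K W A B : Matrix m m ℂ) (t : ℝ) :
    Phi μ r K W (((1 - t : ℝ) : ℂ) • A + ((t : ℝ) : ℂ) • B) =
      (1 - t) * Phi μ r K W A + t * Phi μ r K W B := by
  unfold Phi
  simp only [mul_add, add_mul, Matrix.mul_smul, Matrix.smul_mul, Matrix.trace_add,
    Matrix.trace_smul, Complex.add_re, smul_eq_mul, Complex.re_ofReal_mul]
  ring

theorem Gfun_convex {m : Type*} [Fintype m] [DecidableEq m] {μ r : ℝ} (hμ : 0 ≤ μ) (hr : 0 < r)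
    (K : Matrix m m ℂ) {A B : Matrix m m ℂ} (hA : A.PosDef) (hB : B.PosDef) {t : ℝ}
    (ht0 : 0 ≤ t) (ht1 : t ≤ 1)
    (hC : (((1 - t : ℝ) : ℂ) • A + ((t : ℝ) : ℂ) • B).PosDef) :
    Gfun μ r K hC.isHermitian ≤
      (1 - t) * Gfun μ r K hA.isHermitian + t * Gfun μ r K hB.isHermitian := by
  obtain ⟨W, hW⟩ := Phi_attained hμ hr K hC
  rw [← hW, Phi_affine]
  have h1 := Phi_le hμ hr K W hA
  have h2 := Phi_le hμ hr K W hB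
  have h3 : 0 ≤ 1 - t := by linarith
  gcongr

theorem comb_posDef {m : Type*} [Fintype m] [DecidableEq m] {A B : Matrix m m ℂ}
    (hA : A.PosDef) (hB : B.PosDef) {t : ℝ} (ht0 : 0 ≤ t) (ht1 : t ≤ 1) :
    (((1 - t : ℝ) : ℂ) • A + ((t : ℝ) : ℂ) • B).PosDef := by
  rcases ht0.eq_or_lt with rfl | h
  · simpa using hA
  · have h1 : (0 : ℂ) ≤ ((1 - t : ℝ) : ℂ) := by
      rw [Complex.zero_le_real]; linarith
    have h2 : (0 : ℂ) < (t : ℂ) := by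
      rw [Complex.zero_lt_real]; exact h
    exact Matrix.PosDef.posSemidef_add (hA.posSemidef.smul h1) (hB.smul h2)

theorem F_formula {m : Type*} [Fintype m] [DecidableEq m] (p : ℝ)
    (K : Matrix m m ℂ) {A : Matrix m m ℂ} (hA : A.IsHermitian) :
    (mpow A p * Kᴴ * mpow A (1 - p) * K).trace.re = ∑ i, ∑ j,
      (hA.eigenvalues j) ^ (1 - p) * (hA.eigenvalues i) ^ p *
        (star (rot hA K j i) * rot hA K j i).re := by
  have := trace_formula hA (fun x => x ^ (1 - p)) (fun x => x ^ p) K K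
  rw [← this]
  simp only [mul_assoc]
  rw [Matrix.trace_mul_comm]
  simp only [mul_assoc]
  rfl

open MeasureTheory Real

theorem F_integral {m : Type*} [Fintype m] [DecidableEq m] {s : ℝ} (hs : s ∈ Set.Ioo 0 1)
    (K : Matrix m m ℂ) {A : Matrix m m ℂ} (hA : A.PosDef) :
    IntegrableOn (fun t => t ^ (s - 1) * Gfun 1 t K hA.isHermitian) (Set.Ioi 0) ∧
    (mpow A (-s) * Kᴴ * mpow A (1 - (-s)) * K).trace.re =
      (∫ t in Set.Ioi 0, rpowIntegrand₀₁ s t 1)⁻¹ *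
        ∫ t in Set.Ioi 0, t ^ (s - 1) * Gfun 1 t K hA.isHermitian := by
  have hpos := hA.eigenvalues_pos
  set d := hA.isHermitian.eigenvalues with hd
  let q : m → m → ℝ := fun j i => (star (rot hA.isHermitian K j i) * rot hA.isHermitian K j i).re
  have heq : Set.EqOn (fun t => t ^ (s - 1) * Gfun 1 t K hA.isHermitian)
      (fun t => ∑ i, ∑ j, (d j * q j i) * rpowIntegrand₀₁ s t (d j / d i)) (Set.Ioi 0) := by
    intro t ht
    have ht : 0 < t := ht
    simp only [Gfun, Finset.mul_sum]
    refine Finset.sum_congr rfl fun i _ => Finset.sum_congr rfl fun j _ => ?_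
    have hi := hpos i
    have hj := hpos j
    rw [← hd]
    change _ * (_ * q j i) = _
    rw [rpowIntegrand₀₁, Real.rpow_sub_one ht.ne']
    have : t + d j / d i ≠ 0 := by positivity
    have : 1 * d j + t * d i ≠ 0 := by positivity
    have : t * d i + d j ≠ 0 := by positivity
    field_simp
    ring
  have hint : ∀ i j, IntegrableOn
      (fun t => (d j * q j i) * rpowIntegrand₀₁ s t (d j / d i)) (Set.Ioi 0) := fun i j =>
    (integrableOn_rpowIntegrand₀₁_Ioi hs (div_pos (hpos j) (hpos i)).le).const_mul _
  refine ⟨?_, ?_⟩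
  · rw [integrableOn_congr_fun heq measurableSet_Ioi]
    exact integrable_finsetSum _ fun i _ => integrable_finsetSum _ fun j _ => hint i j
  · rw [setIntegral_congr_fun measurableSet_Ioi heq, F_formula _ _ hA.isHermitian]
    rw [integral_finsetSum _ fun i _ => integrable_finsetSum _ fun j _ => hint i j, Finset.mul_sum]
    refine Finset.sum_congr rfl fun i _ => ?_
    rw [integral_finsetSum _ fun j _ => hint i j, Finset.mul_sum]
    refine Finset.sum_congr rfl fun j _ => ?_
    rw [integral_const_mul, mul_left_comm,
      ← rpow_eq_const_mul_integral hs (div_pos (hpos j) (hpos i)).le, ← hd]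
    change _ * q j i = _
    rw [Real.div_rpow (hpos j).le (hpos i).le, sub_neg_eq_add, Real.rpow_add (hpos j),
      Real.rpow_neg (hpos i).le, Real.rpow_one]
    ring

theorem ando_convexity_trace {n : ℕ} (K : Matrix (Fin n) (Fin n) ℂ) (p : ℝ)
    (hp0 : -1 ≤ p) (hp1 : p < 0) (Z₀ Z₁ : Matrix (Fin n) (Fin n) ℂ)
    (hZ₀ : Z₀.PosDef) (hZ₁ : Z₁.PosDef) (t : ℝ) (ht0 : 0 ≤ t) (ht1 : t ≤ 1) :
    (mpow (((1 - t : ℝ) : ℂ) • Z₀ + ((t : ℝ) : ℂ) • Z₁) p * Kᴴ *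
        mpow (((1 - t : ℝ) : ℂ) • Z₀ + ((t : ℝ) : ℂ) • Z₁) (1 - p) * K).trace.re ≤
      (1 - t) * (mpow Z₀ p * Kᴴ * mpow Z₀ (1 - p) * K).trace.re +
        t * (mpow Z₁ p * Kᴴ * mpow Z₁ (1 - p) * K).trace.re := by
  have hC := comb_posDef hZ₀ hZ₁ ht0 ht1
  rcases hp0.eq_or_lt with rfl | hp
  · have h : ∀ {A : Matrix (Fin n) (Fin n) ℂ} (hA : A.PosDef),
        (mpow A (-1) * Kᴴ * mpow A (1 - (-1)) * K).trace.re = Gfun 0 1 K hA.isHermitian := by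
      intro A hA
      rw [F_formula _ _ hA.isHermitian, Gfun]
      refine Finset.sum_congr rfl fun i _ => Finset.sum_congr rfl fun j _ => ?_
      rw [Real.rpow_neg_one, show (1 - (-1) : ℝ) = (2 : ℕ) by norm_num, Real.rpow_natCast]
      simp [div_eq_mul_inv]
    rw [h hZ₀, h hZ₁, h hC]
    exact Gfun_convex le_rfl one_pos K hZ₀ hZ₁ ht0 ht1 hC
  · obtain ⟨s, rfl⟩ : ∃ s, p = -s := ⟨-p, by ring⟩
    have hs : s ∈ Set.Ioo (0 : ℝ) 1 := ⟨by linarith, by linarith⟩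
    obtain ⟨i0, e0⟩ := F_integral hs K hZ₀
    obtain ⟨i1, e1⟩ := F_integral hs K hZ₁
    obtain ⟨iC, eC⟩ := F_integral hs K hC
    rw [e0, e1, eC]
    have hc : 0 ≤ (∫ t in Set.Ioi 0, rpowIntegrand₀₁ s t 1)⁻¹ :=
      inv_nonneg.2 (setIntegral_nonneg measurableSet_Ioi fun x hx =>
        rpowIntegrand₀₁_nonneg hs.1 (le_of_lt hx) zero_le_one)
    rw [mul_left_comm, mul_left_comm t, ← mul_add]
    refine mul_le_mul_of_nonneg_left ?_ hc
    rw [← integral_const_mul, ← integral_const_mul,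
      ← integral_add (i0.const_mul _) (i1.const_mul _)]
    refine setIntegral_mono_on iC ((i0.const_mul _).add (i1.const_mul _)) measurableSet_Ioi ?_
    intro r hr
    have hr : 0 < r := hr
    have := Gfun_convex zero_le_one hr K hZ₀ hZ₁ ht0 ht1 hC
    have h2 := mul_le_mul_of_nonneg_left this (Real.rpow_nonneg hr.le (s - 1))
    refine h2.trans (le_of_eq ?_)
    ring
end
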